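/- Fix a 2-valued family of environments with values (γ¹, γ²) and parameter p, and suppose that for every p ∈ [0,1] there exists a deterministic vector v[p] ∈ R^d such that P_{[p]}(lim_{n→∞} n^{-1}X_n = v[p]) = 1. Then each coordinate of v[p] is a monotone function of p on [0,1]; precisely, for each i ∈ {1,…,d}, the map p ↦ v^{[i]}[p] is nondecreasing if u_1^{[i]} ≥ u_2^{[i]} and nonincreasing if u_1^{[i]} ≤ u_2^{[i]}. -/

import Mathlib

/-!
By dominated convergence `v p` is the limit of the annealed means `E_p[X_n] / n`
(`tendsto_integral_walk`). Conditionally on the environment, the walk moves on average by the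
local drift of the site it occupies, so that
`E_p[X_n⁽ⁱ⁾] = n u₂⁽ⁱ⁾ + (u₁⁽ⁱ⁾ - u₂⁽ⁱ⁾) A_n(p)`, where `A_n(p)` is the mean number of visits to
`γ1`-sites before time `n` (`integral_walk_eq`). It remains to see that `A_n` is nondecreasing.

Drive the walk by two independent stacks of i.i.d. steps, one with law `γ1` used at `γ1`-sites,
the other with law `γ2` used at `γ2`-sites. After `k` steps of the first kind and `m` of the
second, the position is a function of `(k, m)` only. The pair `(k, m)` thus follows a directed
path in the quarter plane, going right or up according to the type of the site at `(k, m)`.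
Changing sites from type 2 to type 1 only turns some upward arrows into rightward ones; directed
planar paths started together cannot cross, so for fixed stacks the number `k` of visits to
`γ1`-sites by time `n` can only increase (`stackCount_mono`). Averaging over the stacks gives
the same monotonicity for the quenched means (`meanCount_mono`). Averaging over environments
coupled through i.i.d. uniform labels, with `γ1` at the sites whose label is at most `p`, gives
the monotonicity of `A_n` in `p` (`annealedCount_mono`).
-/

open MeasureTheory Filter Set Topology
open scoped Classical ENNReal

noncomputable section

/-- Lattice sites of `ℤ^d`. -/
abbrev Site (d : ℕ) := Fin d → ℤ

/-- The `2d` unit vectors `±e_i` of `ℤ^d`, indexed by `Fin d × Bool`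
(`true` for `+e_i`, `false` for `-e_i`). -/
def stepVec (d : ℕ) (i : Fin d × Bool) : Site d :=
  if i.2 = true then Pi.single i.1 1 else -Pi.single i.1 1

/-- An element of `𝒫`: a probability measure on the set `E` of unit vectors of `ℤ^d`,
recorded via its probability mass function on lattice vectors. -/
structure EnvDist (d : ℕ) where
  prob : Site d → ℝ
  nonneg : ∀ v, 0 ≤ prob v
  support : ∀ v, prob v ≠ 0 → ∃ i, v = stepVec d i
  total : ∑ i : Fin d × Bool, prob (stepVec d i) = 1

instance {d : ℕ} : MeasurableSpace (EnvDist d) :=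
  MeasurableSpace.comap EnvDist.prob inferInstance

/-- Environments: an element of `𝒫` at every site. -/
abbrev EnvOmega (d : ℕ) := Site d → EnvDist d

/-- Path space for the walk. -/
abbrev PathSpace (d : ℕ) := ℕ → Site d

/-- Sample space for the annealed walk: environment together with path. -/
abbrev RWSpace (d : ℕ) := EnvOmega d × PathSpace d

/-- Dot product of a lattice vector with a real vector. -/
def dotR {d : ℕ} (x : Site d) (l : Fin d → ℝ) : ℝ := ∑ i, (x i : ℝ) * l i

/-- Dot product of two lattice vectors. -/
def dotZ {d : ℕ} (x y : Site d) : ℤ := ∑ i, x i * y i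

/-- Quenched probability that the walk follows the steps of `x` for its first `n` steps. -/
def pathWeight {d : ℕ} (ω : EnvOmega d) (n : ℕ) (x : ℕ → Site d) : ℝ :=
  ∏ k ∈ Finset.range n, (ω (x k)).prob (x (k + 1) - x k)

/-- `ν` is the product measure `μ^{⊗ℤ^d}`, i.e. the coordinates are i.i.d. with law `μ`. -/
def IsIIDEnv {d : ℕ} (μ : Measure (EnvDist d)) (ν : Measure (EnvOmega d)) : Prop :=
  IsProbabilityMeasure μ ∧ IsProbabilityMeasure ν ∧
    ∀ (s : Finset (Site d)) (A : Site d → Set (EnvDist d)),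
      (∀ x ∈ s, MeasurableSet (A x)) →
      ν {ω | ∀ x ∈ s, ω x ∈ A x} = ∏ x ∈ s, μ (A x)

/-- `P` is the annealed law of the RWRE started at the origin in an i.i.d. environment
with marginal `μ`: the environment marginal is the i.i.d. product, and the cylinder
probabilities are given by averaging the quenched Markov-chain probabilities. -/
def IsRWRE {d : ℕ} (μ : Measure (EnvDist d)) (P : Measure (RWSpace d)) : Prop :=
  IsProbabilityMeasure P ∧ IsIIDEnv μ (P.map Prod.fst) ∧
    ∀ (n : ℕ) (x : ℕ → Site d) (A : Set (EnvOmega d)), MeasurableSet A →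
      (P {q | q.1 ∈ A ∧ ∀ k ≤ n, q.2 k = x k}).toReal =
        (if x 0 = 0 then (1 : ℝ) else 0) * ∫ ω in A, pathWeight ω n x ∂(P.map Prod.fst)

/-- `Q` is the quenched law `ℙ_ω` of the walk in the fixed environment `ω`, started at the
origin. -/
def IsQuenchedRW {d : ℕ} (ω : EnvOmega d) (Q : Measure (PathSpace d)) : Prop :=
  IsProbabilityMeasure Q ∧
    ∀ (n : ℕ) (x : ℕ → Site d),
      (Q {w | ∀ k ≤ n, w k = x k}).toReal =
        (if x 0 = 0 then (1 : ℝ) else 0) * pathWeight ω n x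

/-- `x → y`: there is a directed path from `x` to `y` in the graph `G(ω)`. -/
def Reaches {d : ℕ} (ω : EnvOmega d) : Site d → Site d → Prop :=
  Relation.ReflTransGen (fun a b => 0 < (ω a).prob (b - a))

/-- The forward cluster `C_x`. -/
def clusterC {d : ℕ} (ω : EnvOmega d) (x : Site d) : Set (Site d) := {y | Reaches ω x y}

/-- The mutually connected cluster `M_x = C_x ∩ B_x`. -/
def clusterM {d : ℕ} (ω : EnvOmega d) (x : Site d) : Set (Site d) :=
  {y | Reaches ω x y ∧ Reaches ω y x}

/-- The local drift `u = ∑_e γ(e) e` of an environment value `γ`. -/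
def drift {d : ℕ} (γ : EnvDist d) : Fin d → ℝ :=
  fun i => ∑ k : Fin d × Bool, γ.prob (stepVec d k) * ((stepVec d k i : ℤ) : ℝ)

/-- `N_n`: the number of times before time `n` at which the walk sits on a site whose
environment equals `γ`. -/
def envCount {d : ℕ} (γ : EnvDist d) (q : RWSpace d) (n : ℕ) : ℕ :=
  Set.ncard {m : ℕ | m < n ∧ q.1 (q.2 m) = γ}

end

/-! ### Stacks of steps and the deterministic comparison -/

/-- Put the step `e` on top of the stack `s`. -/
def stackCons {d : ℕ} (e : Fin d × Bool) (s : ℕ → Fin d × Bool) : ℕ → Fin d × Bool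
  | 0 => e
  | k + 1 => s k

/-- Displacement produced by the top `k` entries of the stack `s`. -/
def stackSum {d : ℕ} (s : ℕ → Fin d × Bool) (k : ℕ) : Site d :=
  ∑ j ∈ Finset.range k, stepVec d (s j)

lemma stackSum_zero {d : ℕ} (s : ℕ → Fin d × Bool) : stackSum s 0 = 0 := by
  simp [stackSum]

lemma stackSum_cons {d : ℕ} (e : Fin d × Bool) (s : ℕ → Fin d × Bool) (k : ℕ) :
    stackSum (stackCons e s) (k + 1) = stepVec d e + stackSum s k := by
  simp only [stackSum, Finset.sum_range_succ']
  rw [add_comm]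
  rfl

/-- Number of visits to sites of type `true` before time `n` by the walk started at `x` that
takes its next step from the stack `s1` at sites of type `true` and from `s2` at sites of type
`false`. After `k` steps from `s1` and `n - k` steps from `s2` the walk sits at
`x + stackSum s1 k + stackSum s2 (n - k)`, whatever the order of these steps. -/
def stackCount {d : ℕ} (σ : Site d → Bool) (x : Site d) (s1 s2 : ℕ → Fin d × Bool) : ℕ → ℕ
  | 0 => 0
  | n + 1 => stackCount σ x s1 s2 n +
      if σ (x + stackSum s1 (stackCount σ x s1 s2 n)
        + stackSum s2 (n - stackCount σ x s1 s2 n)) = true then 1 else 0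

lemma stackCount_le {d : ℕ} (σ : Site d → Bool) (x : Site d) (s1 s2 : ℕ → Fin d × Bool)
    (n : ℕ) : stackCount σ x s1 s2 n ≤ n := by
  induction n with
  | zero => simp [stackCount]
  | succ n ih =>
    simp only [stackCount]
    split_ifs <;> omega

/-- With the stacks held fixed, turning sites of type `false` into sites of type `true` can only
increase the count: as long as the two counts agree, the two walks sit at the same site, so the
smaller count can never overtake the larger one. -/
lemma stackCount_mono {d : ℕ} {σ τ : Site d → Bool} (h : ∀ y, σ y = true → τ y = true)
    (x : Site d) (s1 s2 : ℕ → Fin d × Bool) (n : ℕ) :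
    stackCount σ x s1 s2 n ≤ stackCount τ x s1 s2 n := by
  induction n with
  | zero => simp [stackCount]
  | succ n ih =>
    simp only [stackCount]
    rcases ih.lt_or_eq with hlt | heq
    · split_ifs <;> omega
    · rw [heq]
      split_ifs with h1 h2
      · exact le_rfl
      · exact absurd (h _ h1) h2
      · omega
      · exact le_rfl

lemma stackCount_cons_left {d : ℕ} {σ : Site d → Bool} {x : Site d} (hx : σ x = true)
    (e : Fin d × Bool) (s1 s2 : ℕ → Fin d × Bool) (n : ℕ) :
    stackCount σ x (stackCons e s1) s2 (n + 1)
      = 1 + stackCount σ (x + stepVec d e) s1 s2 n := by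
  induction n with
  | zero => simp [stackCount, stackSum_zero, hx]
  | succ n ih =>
    rw [stackCount, ih, stackCount]
    rw [add_comm 1 (stackCount σ (x + stepVec d e) s1 s2 n), stackSum_cons,
      Nat.add_sub_add_right, ← add_assoc x]
    omega

lemma stackCount_cons_right {d : ℕ} {σ : Site d → Bool} {x : Site d} (hx : σ x = false)
    (e : Fin d × Bool) (s1 s2 : ℕ → Fin d × Bool) (n : ℕ) :
    stackCount σ x s1 (stackCons e s2) (n + 1)
      = stackCount σ (x + stepVec d e) s1 s2 n := by
  induction n with
  | zero => simp [stackCount, stackSum_zero, hx]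
  | succ n ih =>
    rw [stackCount, ih, stackCount]
    rw [Nat.succ_sub (stackCount_le σ (x + stepVec d e) s1 s2 n), stackSum_cons]
    congr 3
    abel_nf

/-! ### Averaging over the stacks -/

/-- Expectation of `F` over a stack whose top `m` entries are independent steps with law `γ`.
The entries below them are frozen to an arbitrary value `e₀`. -/
def stackExp {d : ℕ} (γ : EnvDist d) (e₀ : Fin d × Bool) :
    ℕ → ((ℕ → Fin d × Bool) → ℝ) → ℝ
  | 0, F => F (fun _ => e₀)
  | m + 1, F => ∑ e, γ.prob (stepVec d e) * stackExp γ e₀ m (fun s => F (stackCons e s))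

lemma stackExp_mono {d : ℕ} (γ : EnvDist d) (e₀ : Fin d × Bool) (m : ℕ)
    {F G : (ℕ → Fin d × Bool) → ℝ} (h : ∀ s, F s ≤ G s) :
    stackExp γ e₀ m F ≤ stackExp γ e₀ m G := by
  induction m generalizing F G with
  | zero => exact h _
  | succ m ih =>
    exact Finset.sum_le_sum fun e _ =>
      mul_le_mul_of_nonneg_left (ih fun s => h _) (γ.nonneg _)

lemma stackExp_const_add {d : ℕ} (γ : EnvDist d) (e₀ : Fin d × Bool) (m : ℕ) (c : ℝ)
    (F : (ℕ → Fin d × Bool) → ℝ) :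
    stackExp γ e₀ m (fun s => c + F s) = c + stackExp γ e₀ m F := by
  induction m generalizing F with
  | zero => rfl
  | succ m ih =>
    simp only [stackExp, ih, mul_add, Finset.sum_add_distrib, ← Finset.sum_mul, γ.total, one_mul]

lemma stackExp_sum {d : ℕ} (γ : EnvDist d) (e₀ : Fin d × Bool) (m : ℕ)
    (c : Fin d × Bool → ℝ) (F : Fin d × Bool → (ℕ → Fin d × Bool) → ℝ) :
    stackExp γ e₀ m (fun s => ∑ e, c e * F e s) = ∑ e, c e * stackExp γ e₀ m (F e) := by
  induction m generalizing F with
  | zero => rfl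
  | succ m ih =>
    simp only [stackExp]
    simp_rw [fun a => ih (fun e s => F e (stackCons a s)), Finset.mul_sum]
    rw [Finset.sum_comm]
    refine Finset.sum_congr rfl fun e _ => Finset.sum_congr rfl fun a _ => ?_
    ring

/-- Quenched expectation of the number of visits to sites of type `true` before time `n`, for
the walk from `x` that steps with law `γ1` at sites of type `true` and `γ2` at sites of type
`false`; defined by conditioning on the first step. -/
def meanCount {d : ℕ} (γ1 γ2 : EnvDist d) (σ : Site d → Bool) : ℕ → Site d → ℝ
  | 0, _ => 0
  | n + 1, x => if σ x = true
      then 1 + ∑ e, γ1.prob (stepVec d e) * meanCount γ1 γ2 σ n (x + stepVec d e)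
      else ∑ e, γ2.prob (stepVec d e) * meanCount γ1 γ2 σ n (x + stepVec d e)

/-- The walk driven by two independent stacks of i.i.d. steps has the law of the quenched
walk, here tested on the count. -/
lemma stackExp_stackCount {d : ℕ} (γ1 γ2 : EnvDist d) (e₀ : Fin d × Bool) (σ : Site d → Bool)
    (n : ℕ) : ∀ (x : Site d) (m1 m2 : ℕ), n ≤ m1 → n ≤ m2 →
    stackExp γ1 e₀ m1 (fun s1 => stackExp γ2 e₀ m2
      (fun s2 => (stackCount σ x s1 s2 n : ℝ))) = meanCount γ1 γ2 σ n x := by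
  induction n with
  | zero =>
    intro x m1 m2 _ _
    have h0 : ∀ (γ : EnvDist d) m, stackExp γ e₀ m (fun _ => (0 : ℝ)) = 0 := by
      intro γ m
      induction m with
      | zero => rfl
      | succ m ih => simp [stackExp, ih]
    simp [stackCount, meanCount, h0]
  | succ n ih =>
    intro x m1 m2 h1 h2
    obtain ⟨m1, rfl⟩ : ∃ k, m1 = k + 1 := ⟨m1 - 1, by omega⟩
    obtain ⟨m2, rfl⟩ : ∃ k, m2 = k + 1 := ⟨m2 - 1, by omega⟩
    rw [meanCount]
    split_ifs with hx
    · rw [stackExp]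
      simp_rw [stackCount_cons_left hx, Nat.cast_add, Nat.cast_one, stackExp_const_add,
        ih _ m1 (m2 + 1) (by omega) (by omega), mul_add, Finset.sum_add_distrib, mul_one, γ1.total]
    · have hx' : σ x = false := by simpa using hx
      have key : ∀ s1, stackExp γ2 e₀ (m2 + 1)
          (fun s2 => (stackCount σ x s1 s2 (n + 1) : ℝ))
          = ∑ e, γ2.prob (stepVec d e) * stackExp γ2 e₀ m2
            (fun s2 => (stackCount σ (x + stepVec d e) s1 s2 n : ℝ)) := by
        intro s1
        rw [stackExp]
        simp_rw [stackCount_cons_right hx']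
      simp_rw [key, stackExp_sum γ1 e₀ (m1 + 1) (fun e => γ2.prob (stepVec d e))
        (fun e s1 => stackExp γ2 e₀ m2
            (fun s2 => (stackCount σ (x + stepVec d e) s1 s2 n : ℝ))),
        ih _ (m1 + 1) m2 (by omega) (by omega)]

lemma meanCount_mono {d : ℕ} (γ1 γ2 : EnvDist d) (e₀ : Fin d × Bool) {σ τ : Site d → Bool}
    (h : ∀ y, σ y = true → τ y = true) (n : ℕ) (x : Site d) :
    meanCount γ1 γ2 σ n x ≤ meanCount γ1 γ2 τ n x := by
  rw [← stackExp_stackCount γ1 γ2 e₀ σ n x n n le_rfl le_rfl,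
    ← stackExp_stackCount γ1 γ2 e₀ τ n x n n le_rfl le_rfl]
  exact stackExp_mono _ _ _ fun s1 => stackExp_mono _ _ _ fun s2 =>
    Nat.cast_le.2 (stackCount_mono h x s1 s2 n)

lemma meanCount_nonneg {d : ℕ} (γ1 γ2 : EnvDist d) (σ : Site d → Bool) (n : ℕ) (x : Site d) :
    0 ≤ meanCount γ1 γ2 σ n x := by
  induction n generalizing x with
  | zero => exact le_rfl
  | succ n ih =>
    have h := fun γ : EnvDist d => Finset.sum_nonneg fun e (_ : e ∈ Finset.univ) =>
      mul_nonneg (γ.nonneg (stepVec d e)) (ih (x + stepVec d e))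
    rw [meanCount]
    split_ifs
    · linarith [h γ1]
    · exact h γ2

lemma meanCount_le {d : ℕ} (γ1 γ2 : EnvDist d) (σ : Site d → Bool) (n : ℕ) (x : Site d) :
    meanCount γ1 γ2 σ n x ≤ n := by
  induction n generalizing x with
  | zero => simp [meanCount]
  | succ n ih =>
    have h : ∀ γ : EnvDist d,
        ∑ e, γ.prob (stepVec d e) * meanCount γ1 γ2 σ n (x + stepVec d e) ≤ n := by
      intro γ
      calc _ ≤ ∑ e, γ.prob (stepVec d e) * (n : ℝ) := Finset.sum_le_sum fun e _ =>
            mul_le_mul_of_nonneg_left (ih _) (γ.nonneg _)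
        _ = n := by rw [← Finset.sum_mul, γ.total, one_mul]
    rw [meanCount]
    push_cast
    split_ifs
    · linarith [h γ1]
    · linarith [h γ2]

lemma measurable_meanCount {d : ℕ} (γ1 γ2 : EnvDist d) (n : ℕ) (x : Site d) :
    Measurable fun σ : Site d → Bool => meanCount γ1 γ2 σ n x := by
  induction n generalizing x with
  | zero => exact measurable_const
  | succ n ih =>
    simp only [meanCount]
    refine Measurable.ite ?_ ?_ ?_
    · exact measurableSet_eq_fun (measurable_pi_apply x) measurable_const
    · exact measurable_const.add (Finset.measurable_sum _ fun e _ => (ih _).const_mul _)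
    · exact Finset.measurable_sum _ fun e _ => (ih _).const_mul _

/-! ### Quenched expectations over finite paths -/

/-- The nearest-neighbour path from `x` with steps `s`, constant after time `n`. -/
def stepPath {d n : ℕ} (x : Site d) (s : Fin n → Fin d × Bool) (k : ℕ) : Site d :=
  x + ∑ j : Fin n, if (j : ℕ) < k then stepVec d (s j) else 0

lemma stepPath_zero {d n : ℕ} (x : Site d) (s : Fin n → Fin d × Bool) : stepPath x s 0 = x := by
  simp [stepPath]

lemma stepPath_cons {d n : ℕ} (x : Site d) (e : Fin d × Bool) (s : Fin n → Fin d × Bool)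
    (k : ℕ) : stepPath x (Fin.cons e s : Fin (n + 1) → Fin d × Bool) (k + 1)
      = stepPath (x + stepVec d e) s k := by
  simp [stepPath, Fin.sum_univ_succ, add_assoc]

lemma stepPath_succ {d n : ℕ} (x : Site d) (s : Fin n → Fin d × Bool) (k : Fin n) :
    stepPath x s (k + 1) = stepPath x s k + stepVec d (s k) := by
  simp only [stepPath, add_assoc]
  congr 1
  have : ∀ j : Fin n, (if (j : ℕ) < (k : ℕ) + 1 then stepVec d (s j) else 0)
      = (if (j : ℕ) < k then stepVec d (s j) else 0) + if j = k then stepVec d (s j) else 0 := by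
    intro j
    rcases lt_trichotomy (j : ℕ) k with h | h | h
    · simp [h, h.trans (Nat.lt_succ_self _), Fin.ext_iff, h.ne]
    · have : j = k := Fin.ext h
      simp [this]
    · simp [Nat.not_lt.2 h.le, Nat.not_lt.2 (Nat.succ_le_of_lt h), Fin.ext_iff, h.ne']
  rw [Finset.sum_congr rfl fun j _ => this j, Finset.sum_add_distrib]
  simp

lemma stepVec_injective (d : ℕ) : Function.Injective (stepVec d) := by
  rintro ⟨i, b⟩ ⟨j, c⟩ h
  have h1 := congrFun h i
  have h2 := congrFun h j
  by_cases hij : i = j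
  · subst hij
    cases b <;> cases c <;> simp [stepVec] at h1 ⊢
  · cases b <;> cases c <;> simp [stepVec, hij] at h1

lemma abs_stepVec_le {d : ℕ} (e : Fin d × Bool) (i : Fin d) : |(stepVec d e i : ℝ)| ≤ 1 := by
  rcases e with ⟨j, b⟩
  by_cases hij : i = j
  · subst hij
    cases b <;> simp [stepVec]
  · cases b <;> simp [stepVec, hij]

lemma abs_stepPath_le {d n : ℕ} (s : Fin n → Fin d × Bool) (k : ℕ) (i : Fin d) :
    |(stepPath 0 s k i : ℝ)| ≤ n := by
  have : (stepPath 0 s k i : ℝ)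
      = ∑ j : Fin n, if (j : ℕ) < k then (stepVec d (s j) i : ℝ) else 0 := by
    simp only [stepPath, zero_add, Finset.sum_apply, Int.cast_sum]
    refine Finset.sum_congr rfl fun j _ => ?_
    split_ifs <;> simp
  rw [this]
  calc _ ≤ ∑ j : Fin n, |if (j : ℕ) < k then (stepVec d (s j) i : ℝ) else 0| :=
        Finset.abs_sum_le_sum_abs _ _
    _ ≤ ∑ _j : Fin n, (1 : ℝ) := Finset.sum_le_sum fun j _ => by
        split_ifs
        · exact abs_stepVec_le _ _
        · simp
    _ = n := by simp

lemma stepPath_agree_injective {d n : ℕ} (x : Site d) {s t : Fin n → Fin d × Bool}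
    (h : ∀ k ≤ n, stepPath x s k = stepPath x t k) : s = t := by
  funext k
  have h1 := h (k + 1) k.2
  rw [stepPath_succ, stepPath_succ, h k k.2.le] at h1
  exact stepVec_injective d (add_left_cancel h1)

lemma pathWeight_cons {d n : ℕ} (ω : EnvOmega d) (x : Site d) (e : Fin d × Bool)
    (s : Fin n → Fin d × Bool) :
    pathWeight ω (n + 1) (stepPath x (Fin.cons e s : Fin (n + 1) → Fin d × Bool))
      = (ω x).prob (stepVec d e) * pathWeight ω n (stepPath (x + stepVec d e) s) := by
  simp only [pathWeight, Finset.prod_range_succ', stepPath_cons, stepPath_zero]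
  rw [mul_comm, add_sub_cancel_left]

lemma sum_steps_succ {d n : ℕ} (F : (Fin (n + 1) → Fin d × Bool) → ℝ) :
    ∑ s, F s = ∑ e, ∑ s : Fin n → Fin d × Bool, F (Fin.cons e s) := by
  rw [← (Fin.consEquiv fun _ => Fin d × Bool).sum_comp, Fintype.sum_prod_type]
  rfl

lemma sum_pathWeight {d : ℕ} (ω : EnvOmega d) (n : ℕ) (x : Site d) :
    ∑ s : Fin n → Fin d × Bool, pathWeight ω n (stepPath x s) = 1 := by
  induction n generalizing x with
  | zero => simp [pathWeight]
  | succ n ih =>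
    rw [sum_steps_succ]
    simp_rw [pathWeight_cons, ← Finset.mul_sum, ih, mul_one, (ω x).total]

/-- In an environment taking only the values `γ1`, `γ2`, the quenched mean displacement is
the sum of the local drifts weighted by the mean times spent at sites of either type. -/
lemma sum_pathWeight_mul {d : ℕ} {γ1 γ2 : EnvDist d} {ω : EnvOmega d}
    (hω : ∀ y, ω y = γ1 ∨ ω y = γ2) (i : Fin d) (n : ℕ) (x : Site d) :
    ∑ s : Fin n → Fin d × Bool, pathWeight ω n (stepPath x s) * (stepPath x s n i : ℝ)
      = x i + n * drift γ2 i
        + (drift γ1 i - drift γ2 i) * meanCount γ1 γ2 (fun y => decide (ω y = γ1)) n x := by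
  induction n generalizing x with
  | zero => simp [pathWeight, stepPath, meanCount]
  | succ n ih =>
    rw [sum_steps_succ]
    simp_rw [pathWeight_cons, stepPath_cons, mul_assoc, ← Finset.mul_sum, ih]
    have hsum : ∀ γ : EnvDist d, ∑ e, γ.prob (stepVec d e) *
        ((((x + stepVec d e) i : ℤ) : ℝ) + n * drift γ2 i + (drift γ1 i - drift γ2 i) *
          meanCount γ1 γ2 (fun y => decide (ω y = γ1)) n (x + stepVec d e))
        = x i + drift γ i + n * drift γ2 i + (drift γ1 i - drift γ2 i) *
          ∑ e, γ.prob (stepVec d e) *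
            meanCount γ1 γ2 (fun y => decide (ω y = γ1)) n (x + stepVec d e) := by
      intro γ
      have h1 : ((x i : ℤ) : ℝ) + n * drift γ2 i
          = ∑ e, γ.prob (stepVec d e) * ((x i : ℝ) + n * drift γ2 i) := by
        rw [← Finset.sum_mul, γ.total, one_mul]
      have h2 : drift γ i = ∑ e, γ.prob (stepVec d e) * ((stepVec d e i : ℤ) : ℝ) := rfl
      rw [show ((x i : ℤ) : ℝ) + drift γ i + n * drift γ2 i
        = ((x i : ℤ) : ℝ) + n * drift γ2 i + drift γ i by ring, h1, h2, Finset.mul_sum,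
        ← Finset.sum_add_distrib, ← Finset.sum_add_distrib]
      refine Finset.sum_congr rfl fun e _ => ?_
      rw [Pi.add_apply]
      push_cast
      ring
    rw [hsum, meanCount]
    push_cast
    by_cases hx : ω x = γ1
    · simp only [hx, decide_true, if_true]
      ring
    · have hx2 : ω x = γ2 := (hω x).resolve_left hx
      rw [if_neg (by simpa using hx), hx2]
      ring

/-! ### Annealed means -/

lemma measurable_envDist_prob {d : ℕ} (v : Site d) :
    Measurable fun γ : EnvDist d => γ.prob v :=
  (measurable_pi_apply v).comp (comap_measurable EnvDist.prob)

lemma measurableSet_envDist_singleton {d : ℕ} (γ : EnvDist d) :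
    MeasurableSet ({γ} : Set (EnvDist d)) := by
  refine ⟨{γ.prob}, measurableSet_singleton _, ?_⟩
  ext γ'
  rcases γ with ⟨p, _, _, _⟩
  rcases γ' with ⟨p', _, _, _⟩
  simp

lemma envDist_prob_le_one {d : ℕ} (γ : EnvDist d) (v : Site d) : γ.prob v ≤ 1 := by
  by_cases h : γ.prob v = 0
  · simp [h]
  · obtain ⟨e, rfl⟩ := γ.support v h
    rw [← γ.total]
    exact Finset.single_le_sum (f := fun e => γ.prob (stepVec d e))
      (fun e _ => γ.nonneg _) (Finset.mem_univ e)

lemma integrable_pathWeight {d : ℕ} (ν : Measure (EnvOmega d)) [IsProbabilityMeasure ν] (n : ℕ)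
    (x : ℕ → Site d) : Integrable (fun ω => pathWeight ω n x) ν := by
  refine Integrable.of_bound (C := 1) (Measurable.aestronglyMeasurable ?_) ?_
  · exact Finset.measurable_prod _ fun k _ =>
      (measurable_envDist_prob _).comp (measurable_pi_apply _)
  · refine Eventually.of_forall fun ω => ?_
    rw [pathWeight, Real.norm_eq_abs,
      abs_of_nonneg (Finset.prod_nonneg fun k _ => (ω _).nonneg _)]
    exact Finset.prod_le_one (fun k _ => (ω _).nonneg _) fun k _ => envDist_prob_le_one _ _

/-- The event that the walk follows the steps `s`. -/
def stepCyl {d n : ℕ} (s : Fin n → Fin d × Bool) : Set (RWSpace d) :=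
  {q | ∀ k ≤ n, q.2 k = stepPath 0 s k}

lemma measurable_walk {d : ℕ} (k : ℕ) : Measurable fun q : RWSpace d => q.2 k :=
  (measurable_pi_apply k).comp measurable_snd

lemma measurableSet_stepCyl {d n : ℕ} (s : Fin n → Fin d × Bool) :
    MeasurableSet (stepCyl s) := by
  have : stepCyl s = ⋂ k, ⋂ (_ : k ≤ n), (fun q : RWSpace d => q.2 k) ⁻¹' {stepPath 0 s k} := by
    ext q
    simp [stepCyl]
  rw [this]
  exact MeasurableSet.iInter fun k => MeasurableSet.iInter fun _ =>
    measurable_walk k (measurableSet_singleton _)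

lemma disjoint_stepCyl {d n : ℕ} :
    Pairwise (Function.onFun Disjoint (stepCyl : (Fin n → Fin d × Bool) → _)) := by
  intro s t hst
  refine Set.disjoint_left.2 fun q hs ht => hst ?_
  exact stepPath_agree_injective 0 fun k hk => (hs k hk).symm.trans (ht k hk)

lemma measure_stepCyl {d n : ℕ} {μ : Measure (EnvDist d)} {P : Measure (RWSpace d)}
    (hP : IsRWRE μ P) (s : Fin n → Fin d × Bool) :
    P.real (stepCyl s) = ∫ ω, pathWeight ω n (stepPath 0 s) ∂(P.map Prod.fst) := by
  have h := hP.2.2 n (stepPath 0 s) Set.univ MeasurableSet.univ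
  simpa [stepPath_zero, stepCyl, Measure.real] using h

/-- Almost surely the walk makes nearest-neighbour steps from the origin. -/
lemma ae_mem_stepCyl {d : ℕ} {μ : Measure (EnvDist d)} {P : Measure (RWSpace d)}
    (hP : IsRWRE μ P) (n : ℕ) : ∀ᵐ q ∂P, q ∈ ⋃ s : Fin n → Fin d × Bool, stepCyl s := by
  have := hP.1
  have := hP.2.1.2.1
  change (⋃ s : Fin n → Fin d × Bool, stepCyl s) ∈ ae P
  rw [mem_ae_iff_prob_eq_one (MeasurableSet.iUnion fun s => measurableSet_stepCyl s)]
  have h : P.real (⋃ s : Fin n → Fin d × Bool, stepCyl s) = 1 := by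
    rw [measureReal_iUnion_fintype disjoint_stepCyl measurableSet_stepCyl]
    simp_rw [measure_stepCyl hP]
    rw [← integral_finsetSum _ fun s _ => integrable_pathWeight _ _ _]
    simp [sum_pathWeight]
  rw [← ENNReal.ofReal_toReal (measure_ne_top P _)]
  simpa [Measure.real] using congrArg ENNReal.ofReal h

lemma ae_abs_walk_le {d : ℕ} {μ : Measure (EnvDist d)} {P : Measure (RWSpace d)}
    (hP : IsRWRE μ P) (n : ℕ) (i : Fin d) : ∀ᵐ q ∂P, |(q.2 n i : ℝ)| ≤ n := by
  filter_upwards [ae_mem_stepCyl hP n] with q hq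
  obtain ⟨s, hs⟩ := Set.mem_iUnion.1 hq
  rw [hs n le_rfl]
  exact abs_stepPath_le s n i

lemma measurable_walk_coord {d : ℕ} (n : ℕ) (i : Fin d) :
    Measurable fun q : RWSpace d => ((q.2 n i : ℤ) : ℝ) :=
  (measurable_from_top (f := fun z : ℤ => (z : ℝ))).comp
    ((measurable_pi_apply i).comp (measurable_walk n))

lemma integral_walk {d : ℕ} {μ : Measure (EnvDist d)} {P : Measure (RWSpace d)}
    (hP : IsRWRE μ P) (n : ℕ) (i : Fin d) :
    ∫ q, (q.2 n i : ℝ) ∂P = ∫ ω, ∑ s : Fin n → Fin d × Bool,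
      pathWeight ω n (stepPath 0 s) * (stepPath 0 s n i : ℝ) ∂(P.map Prod.fst) := by
  have := hP.1
  have := hP.2.1.2.1
  have hint : Integrable (fun q : RWSpace d => (q.2 n i : ℝ)) P :=
    Integrable.of_bound (C := n) (measurable_walk_coord n i).aestronglyMeasurable
      (ae_abs_walk_le hP n i)
  rw [integral_finsetSum _ fun s _ => (integrable_pathWeight _ _ _).mul_const _]
  simp_rw [integral_mul_const, ← measure_stepCyl hP]
  rw [← Measure.restrict_eq_self_of_ae_mem (ae_mem_stepCyl hP n),
    integral_iUnion_fintype measurableSet_stepCyl disjoint_stepCyl fun s => hint.integrableOn,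
    Measure.restrict_eq_self_of_ae_mem (ae_mem_stepCyl hP n)]
  refine Finset.sum_congr rfl fun s _ => ?_
  have hc : ∀ q ∈ stepCyl s, ((q.2 n i : ℤ) : ℝ) = (stepPath 0 s n i : ℝ) := by
    intro q hq
    rw [hq n le_rfl]
  rw [setIntegral_congr_fun (measurableSet_stepCyl s) hc, setIntegral_const, smul_eq_mul]

/-! ### The Bernoulli environment and its monotone coupling -/

lemma isIIDEnv_eq_infinitePi {d : ℕ} {μ : Measure (EnvDist d)} [IsProbabilityMeasure μ]
    {ν : Measure (EnvOmega d)} (h : IsIIDEnv μ ν) :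
    ν = Measure.infinitePi fun _ : Site d => μ :=
  Measure.eq_infinitePi _ fun s t ht => h.2.2 s t fun x _ => ht x

/-- Type configuration obtained by thresholding i.i.d. uniform labels at level `p`. -/
noncomputable def threshold {d : ℕ} (p : unitInterval) (U : Site d → unitInterval) : Site d → Bool :=
  fun x => decide (U x ≤ p)

lemma measurable_decide_le (p : unitInterval) :
    Measurable fun u : unitInterval => decide (u ≤ p) :=
  measurable_to_bool (by
    convert (measurableSet_Iic : MeasurableSet (Set.Iic p)) using 1
    ext u
    simp)

lemma measurable_decide_eq {d : ℕ} (γ : EnvDist d) :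
    Measurable fun γ' : EnvDist d => decide (γ' = γ) :=
  measurable_to_bool (by
    convert measurableSet_envDist_singleton γ using 1
    ext u
    simp)

lemma measurable_threshold {d : ℕ} (p : unitInterval) :
    Measurable (threshold p : (Site d → unitInterval) → Site d → Bool) :=
  measurable_pi_lambda _ fun x => (measurable_decide_le p).comp (measurable_pi_apply x)

/-- The configuration of types `γ1` under the environment law is the thresholded uniform one. -/
lemma map_types_eq {d : ℕ} {γ1 : EnvDist d} {μ : Measure (EnvDist d)} {ν : Measure (EnvOmega d)}
    (h : IsIIDEnv μ ν) (p : unitInterval) (hμ : μ {γ1} = ENNReal.ofReal p) :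
    ν.map (fun ω x => decide (ω x = γ1))
      = (Measure.infinitePi fun _ : Site d => (volume : Measure unitInterval)).map
          (threshold p) := by
  have := h.1
  have h1 : μ.map (fun γ' => decide (γ' = γ1))
      = (volume : Measure unitInterval).map (fun u => decide (u ≤ p)) := by
    have := Measure.isProbabilityMeasure_map (μ := μ) (measurable_decide_eq γ1).aemeasurable
    have := Measure.isProbabilityMeasure_map (μ := (volume : Measure unitInterval))
      (measurable_decide_le p).aemeasurable
    have ht : μ.map (fun γ' => decide (γ' = γ1)) {true}
        = (volume : Measure unitInterval).map (fun u => decide (u ≤ p)) {true} := by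
      rw [Measure.map_apply (measurable_decide_eq γ1) (measurableSet_singleton _),
        Measure.map_apply (measurable_decide_le p) (measurableSet_singleton _)]
      have e1 : (fun γ' => decide (γ' = γ1)) ⁻¹' {true} = {γ1} := by
        ext; simp
      have e2 : (fun u => decide (u ≤ p)) ⁻¹' {true} = Set.Iic p := by
        ext; simp
      rw [e1, e2, hμ, unitInterval.volume_Iic]
    refine Measure.ext_of_singleton fun b => ?_
    cases b
    · have e : ({false} : Set Bool) = {true}ᶜ := by
        ext b; simp
      rw [e, prob_compl_eq_one_sub (measurableSet_singleton _),
        prob_compl_eq_one_sub (measurableSet_singleton _), ht]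
    · exact ht
  rw [isIIDEnv_eq_infinitePi h,
    Measure.infinitePi_map_pi _ fun _ => measurable_decide_eq γ1]
  unfold threshold
  rw [Measure.infinitePi_map_pi _ fun _ => measurable_decide_le p]
  simp_rw [h1]

/-- Annealed mean number of visits to sites of type `γ1` before time `n` at parameter `p`. -/
noncomputable def annealedCount {d : ℕ} (γ1 γ2 : EnvDist d) (n : ℕ) (p : unitInterval) : ℝ :=
  ∫ U, meanCount γ1 γ2 (threshold p U) n 0
    ∂(Measure.infinitePi fun _ : Site d => (volume : Measure unitInterval))

lemma annealedCount_mono {d : ℕ} (γ1 γ2 : EnvDist d) (e₀ : Fin d × Bool) (n : ℕ) :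
    Monotone (annealedCount γ1 γ2 n) := by
  intro p q hpq
  have hint : ∀ r : unitInterval, Integrable (fun U => meanCount γ1 γ2 (threshold r U) n 0)
      (Measure.infinitePi fun _ : Site d => (volume : Measure unitInterval)) := by
    intro r
    refine Integrable.of_bound (C := n)
      ((measurable_meanCount γ1 γ2 n 0).comp (measurable_threshold r)).aestronglyMeasurable
      (Eventually.of_forall fun U => ?_)
    rw [Real.norm_eq_abs, abs_of_nonneg (meanCount_nonneg _ _ _ _ _)]
    exact meanCount_le _ _ _ _ _
  refine integral_mono (hint p) (hint q) fun U => meanCount_mono γ1 γ2 e₀ (fun y hy => ?_) n 0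
  simp only [threshold, decide_eq_true_eq] at hy ⊢
  exact hy.trans hpq

lemma ae_two_valued {d : ℕ} {γ1 γ2 : EnvDist d} (hγ : γ1 ≠ γ2) {μ : Measure (EnvDist d)}
    {ν : Measure (EnvOmega d)} (h : IsIIDEnv μ ν) (p : unitInterval)
    (hμ1 : μ {γ1} = ENNReal.ofReal p) (hμ2 : μ {γ2} = ENNReal.ofReal (1 - p)) :
    ∀ᵐ ω ∂ν, ∀ x, ω x = γ1 ∨ ω x = γ2 := by
  have := h.1
  have := h.2.1
  have hm : MeasurableSet ({γ1} ∪ {γ2} : Set (EnvDist d)) :=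
    (measurableSet_envDist_singleton γ1).union (measurableSet_envDist_singleton γ2)
  have h1 : μ ({γ1} ∪ {γ2}) = 1 := by
    rw [measure_union (by simpa using hγ) (measurableSet_envDist_singleton γ2), hμ1, hμ2,
      ← ENNReal.ofReal_add p.2.1 (sub_nonneg.2 p.2.2)]
    simp
  refine ae_all_iff.2 fun x => ?_
  have hx := h.2.2 {x} (fun _ => {γ1} ∪ {γ2}) fun _ _ => hm
  have hx' : ν ((fun ω : EnvOmega d => ω x) ⁻¹' ({γ1} ∪ {γ2})) = 1 := by
    rw [Finset.prod_singleton, h1] at hx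
    rw [← hx]
    congr 1
    ext ω
    simp
  have := (mem_ae_iff_prob_eq_one (measurable_pi_apply x hm)).2 hx'
  filter_upwards [this] with ω hω
  exact hω

lemma integral_walk_eq {d : ℕ} {γ1 γ2 : EnvDist d} (hγ : γ1 ≠ γ2) {μ : Measure (EnvDist d)}
    {P : Measure (RWSpace d)} (hP : IsRWRE μ P) (p : unitInterval)
    (hμ1 : μ {γ1} = ENNReal.ofReal p) (hμ2 : μ {γ2} = ENNReal.ofReal (1 - p))
    (n : ℕ) (i : Fin d) :
    ∫ q, (q.2 n i : ℝ) ∂P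
      = n * drift γ2 i + (drift γ1 i - drift γ2 i) * annealedCount γ1 γ2 n p := by
  have := hP.2.1.2.1
  have hσ : Measurable fun (ω : EnvOmega d) (x : Site d) => decide (ω x = γ1) :=
    measurable_pi_lambda _ fun x => (measurable_decide_eq γ1).comp (measurable_pi_apply x)
  have hae : ∀ᵐ ω ∂(P.map Prod.fst), ∑ s : Fin n → Fin d × Bool,
      pathWeight ω n (stepPath 0 s) * (stepPath 0 s n i : ℝ)
      = n * drift γ2 i + (drift γ1 i - drift γ2 i)
        * meanCount γ1 γ2 (fun y => decide (ω y = γ1)) n 0 := by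
    filter_upwards [ae_two_valued hγ hP.2.1 p hμ1 hμ2] with ω hω
    simpa using sum_pathWeight_mul hω i n 0
  have hcount : ∫ ω, meanCount γ1 γ2 (fun y => decide (ω y = γ1)) n 0 ∂(P.map Prod.fst)
      = annealedCount γ1 γ2 n p := by
    rw [← integral_map (f := fun σ => meanCount γ1 γ2 σ n 0) hσ.aemeasurable
      (measurable_meanCount γ1 γ2 n 0).aestronglyMeasurable, map_types_eq hP.2.1 p hμ1,
      integral_map (measurable_threshold p).aemeasurable
        (measurable_meanCount γ1 γ2 n 0).aestronglyMeasurable]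
    rfl
  have hint : Integrable (fun ω => meanCount γ1 γ2 (fun y => decide (ω y = γ1)) n 0)
      (P.map Prod.fst) := by
    refine Integrable.of_bound (C := n)
      ((measurable_meanCount γ1 γ2 n 0).comp hσ).aestronglyMeasurable
      (Eventually.of_forall fun U => ?_)
    rw [Real.norm_eq_abs, abs_of_nonneg (meanCount_nonneg _ _ _ _ _)]
    exact meanCount_le _ _ _ _ _
  rw [integral_walk hP, integral_congr_ae hae, integral_add (integrable_const _)
    (hint.const_mul _), integral_const_mul (drift γ1 i - drift γ2 i), hcount]
  simp

/-- The velocity is the limit of the annealed mean displacements, by dominated convergence. -/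
lemma tendsto_integral_walk {d : ℕ} {μ : Measure (EnvDist d)} {P : Measure (RWSpace d)}
    (hP : IsRWRE μ P) {w : Fin d → ℝ}
    (hw : P {q : RWSpace d |
        Tendsto (fun n : ℕ => (n : ℝ)⁻¹ • (fun i => ((q.2 n i : ℤ) : ℝ))) atTop (𝓝 w)} = 1)
    (i : Fin d) :
    Tendsto (fun n : ℕ => (n : ℝ)⁻¹ * ∫ q, (q.2 n i : ℝ) ∂P) atTop (𝓝 (w i)) := by
  have := hP.1
  have hmeas : ∀ n : ℕ, Measurable
      fun q : RWSpace d => (n : ℝ)⁻¹ • (fun i => ((q.2 n i : ℤ) : ℝ)) := fun n =>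
    measurable_pi_lambda _ fun j => (measurable_walk_coord n j).const_mul _
  have hae := (mem_ae_iff_prob_eq_one (measurableSet_tendsto_fun (l := atTop) hmeas
    (measurable_const (a := w)))).2 hw
  have hlim := tendsto_integral_of_dominated_convergence (μ := P)
    (F := fun (n : ℕ) q => (n : ℝ)⁻¹ * (q.2 n i : ℝ)) (f := fun _ => w i) (fun _ => 1)
    (fun n => ((measurable_walk_coord n i).const_mul _).aestronglyMeasurable)
    (integrable_const _)
    (fun n => by
      filter_upwards [ae_abs_walk_le hP n i] with q hq
      rw [Real.norm_eq_abs, abs_mul, abs_inv, Nat.abs_cast]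
      exact (mul_le_mul_of_nonneg_left hq (by positivity)).trans inv_mul_le_one)
    (by
      filter_upwards [hae] with q hq
      exact (tendsto_pi_nhds.1 hq) i)
  simpa [integral_const_mul] using hlim

/-- for a 2-valued family `(γ¹, γ²)` with parameter `p`, if a deterministic
velocity `v[p]` exists for every `p ∈ [0,1]`, then each coordinate of `v[p]` is monotone
in `p`: nondecreasing if `u₁⁽ⁱ⁾ ≥ u₂⁽ⁱ⁾` and nonincreasing if `u₁⁽ⁱ⁾ ≤ u₂⁽ⁱ⁾`. -/
theorem stmt4 {d : ℕ} (hd : 2 ≤ d) (γ1 γ2 : EnvDist d) (hγ : γ1 ≠ γ2)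
    (μ : ℝ → Measure (EnvDist d))
    (hμ : ∀ p ∈ Set.Icc (0 : ℝ) 1,
      μ p {γ1} = ENNReal.ofReal p ∧ μ p {γ2} = ENNReal.ofReal (1 - p))
    (P : ℝ → Measure (RWSpace d))
    (hP : ∀ p ∈ Set.Icc (0 : ℝ) 1, IsRWRE (μ p) (P p))
    (v : ℝ → Fin d → ℝ)
    (hv : ∀ p ∈ Set.Icc (0 : ℝ) 1,
      P p {q : RWSpace d |
        Tendsto (fun n : ℕ => (n : ℝ)⁻¹ • (fun i => ((q.2 n i : ℤ) : ℝ))) atTop (𝓝 (v p))} = 1) :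
    ∀ i : Fin d,
      (drift γ2 i ≤ drift γ1 i → MonotoneOn (fun p => v p i) (Set.Icc 0 1)) ∧
      (drift γ1 i ≤ drift γ2 i → AntitoneOn (fun p => v p i) (Set.Icc 0 1)) := by
  intro i
  have e₀ : Fin d × Bool := (i, true)
  have hlim : ∀ p (hp : p ∈ Set.Icc (0 : ℝ) 1), Tendsto (fun n : ℕ => (n : ℝ)⁻¹ *
      (n * drift γ2 i + (drift γ1 i - drift γ2 i) * annealedCount γ1 γ2 n ⟨p, hp⟩))
      atTop (𝓝 (v p i)) := by
    intro p hp
    simpa only [integral_walk_eq hγ (hP p hp) ⟨p, hp⟩ (hμ p hp).1 (hμ p hp).2]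
      using tendsto_integral_walk (hP p hp) (hv p hp) i
  constructor
  · intro hdr p hp q hq hpq
    refine le_of_tendsto_of_tendsto' (hlim p hp) (hlim q hq) fun n => ?_
    have hmono := annealedCount_mono γ1 γ2 e₀ n (show (⟨p, hp⟩ : unitInterval) ≤ ⟨q, hq⟩ from hpq)
    have := mul_le_mul_of_nonneg_left hmono (sub_nonneg.2 hdr)
    gcongr
  · intro hdr p hp q hq hpq
    refine le_of_tendsto_of_tendsto' (hlim q hq) (hlim p hp) fun n => ?_
    have hmono := annealedCount_mono γ1 γ2 e₀ n (show (⟨p, hp⟩ : unitInterval) ≤ ⟨q, hq⟩ from hpq)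
    have := mul_le_mul_of_nonpos_left hmono (sub_nonpos.2 hdr)
    gcongr
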